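/- Let f ∈ ℂ[X₀, …, Xₙ] be homogeneous of degree d − n − 1 and suppose that f ∈ I_v^{ord_P(v)} for every v in the point residual R₀(P). Then f ∈ I_v^{ord_P(L_v)} for every nonzero v ∈ ℝ^{n+1}. (Reduction of the interpolation problem to dimension zero: prescribed vanishing at the finitely many points of the point residual already forces the prescribed vanishing order at every point of projective space.) -/

import Mathlib

open MvPolynomial Finset Classical

noncomputable section

/-- The homogenization embedding `y ↦ (1, y₁, …, yₙ)`. -/
def lift1 {n : ℕ} (y : Fin n → ℝ) : Fin (n + 1) → ℝ := Fin.cons 1 y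

/-- The polytope `P = {y ∈ ℝⁿ | ℓᵢ(1,y) ≥ 0 for all i}`. -/
def polytopeOf {n d : ℕ} (ℓ : Fin d → MvPolynomial (Fin (n + 1)) ℝ) : Set (Fin n → ℝ) :=
  {y | ∀ i, 0 ≤ eval (lift1 y) (ℓ i)}

/-- The facet `Fᵢ = {y ∈ P | ℓᵢ(1,y) = 0}`. -/
def facetOf {n d : ℕ} (ℓ : Fin d → MvPolynomial (Fin (n + 1)) ℝ) (i : Fin d) :
    Set (Fin n → ℝ) :=
  {y ∈ polytopeOf ℓ | eval (lift1 y) (ℓ i) = 0}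

/-- The flat `F_v = {i | ℓᵢ(v) = 0}` of all facet hyperplanes through `v`. -/
def flatOf {n d : ℕ} (ℓ : Fin d → MvPolynomial (Fin (n + 1)) ℝ) (v : Fin (n + 1) → ℝ) :
    Finset (Fin d) :=
  Finset.univ.filter fun i => eval v (ℓ i) = 0

/-- The rank `r_v`: the dimension of the linear span of `{ℓᵢ : i ∈ F_v}`. -/
def rkOf {n d : ℕ} (ℓ : Fin d → MvPolynomial (Fin (n + 1)) ℝ) (v : Fin (n + 1) → ℝ) : ℕ :=
  Module.finrank ℝ (Submodule.span ℝ (ℓ '' (flatOf ℓ v : Set (Fin d))))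

/-- The nullity `nl_v = |F_v| − r_v`. -/
def nlOf {n d : ℕ} (ℓ : Fin d → MvPolynomial (Fin (n + 1)) ℝ) (v : Fin (n + 1) → ℝ) : ℕ :=
  (flatOf ℓ v).card - rkOf ℓ v

/-- The set `P_v = {y ∈ P | ℓᵢ(1,y) = 0 for all i ∈ F_v}`. -/
def faceOf {n d : ℕ} (ℓ : Fin d → MvPolynomial (Fin (n + 1)) ℝ) (v : Fin (n + 1) → ℝ) :
    Set (Fin n → ℝ) :=
  {y ∈ polytopeOf ℓ | ∀ i ∈ flatOf ℓ v, eval (lift1 y) (ℓ i) = 0}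

/-- The order `ord_P(L_v)`: equal to `nl_v` if `P_v` is nonempty with affine span of
dimension `n − r_v`, and to `nl_v + 1` otherwise. -/
def ordOf {n d : ℕ} (ℓ : Fin d → MvPolynomial (Fin (n + 1)) ℝ) (v : Fin (n + 1) → ℝ) : ℕ :=
  if (faceOf ℓ v).Nonempty ∧
      Module.finrank ℝ (affineSpan ℝ (faceOf ℓ v)).direction = n - rkOf ℓ v
  then nlOf ℓ v
  else nlOf ℓ v + 1

/-- The ideal `I_v ⊆ ℂ[X₀,…,Xₙ]` generated by all homogeneous degree-1 polynomials
vanishing at the real point `v`. -/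
def pointIdealC {n : ℕ} (v : Fin (n + 1) → ℝ) : Ideal (MvPolynomial (Fin (n + 1)) ℂ) :=
  Ideal.span {p | p.IsHomogeneous 1 ∧ eval (fun i => (v i : ℂ)) p = 0}

/-- The ideal `I_v ⊆ ℝ[X₀,…,Xₙ]` generated by all homogeneous degree-1 polynomials
vanishing at `v`. -/
def pointIdealR {n : ℕ} (v : Fin (n + 1) → ℝ) : Ideal (MvPolynomial (Fin (n + 1)) ℝ) :=
  Ideal.span {p | p.IsHomogeneous 1 ∧ eval v p = 0}

/-- Complexification of a real polynomial. -/
def toC {n : ℕ} (p : MvPolynomial (Fin (n + 1)) ℝ) : MvPolynomial (Fin (n + 1)) ℂ :=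
  map (algebraMap ℝ ℂ) p

/-- The hypotheses on the facet equations `ℓ₁, …, ℓ_d` of a full-dimensional compact convex
polytope `P ⊆ ℝⁿ`: the `ℓᵢ` are pairwise non-proportional homogeneous degree-1 polynomials,
`P` is compact with affine span all of `ℝⁿ`, and each facet `Fᵢ` is nonempty with affine
span of dimension `n − 1`. -/
structure IsPolytopeSetup {n d : ℕ} (ℓ : Fin d → MvPolynomial (Fin (n + 1)) ℝ) : Prop where
  hn : 1 ≤ n
  hd : n + 1 ≤ d
  hhom : ∀ i, (ℓ i).IsHomogeneous 1
  hne : ∀ i, ℓ i ≠ 0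
  hprop : ∀ i j, i ≠ j → ∀ c : ℝ, c • ℓ i ≠ ℓ j
  hcpt : IsCompact (polytopeOf ℓ)
  hfull : affineSpan ℝ (polytopeOf ℓ) = ⊤
  hfacet_ne : ∀ i, (facetOf ℓ i).Nonempty
  hfacet : ∀ i, Module.finrank ℝ (affineSpan ℝ (facetOf ℓ i)).direction = n - 1

/-!
Descend on the dimension of `L_v`. Through `v` take a line in a generic direction of `L_v`: the
hyperplanes not containing `L_v` each meet it exactly once, and the flat of every crossing has rank
`r_v + 1`, so the vanishing of `f` there is already known. Crossings exist because the `ℓᵢ` have no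
common zero, `P` being bounded.

The `k`-th partial derivatives of `f` restrict to the line as univariate polynomials of degree at
most `d - n - 1 - k`, and they vanish at a crossing `w` to order at least `ord_P(L_w) - k`. For
`k < ord_P(L_v)` these orders add up to more than the degree, since each hyperplane is counted at
exactly one crossing, and since, when `P_v` does not span `L_v`, at most one crossing `w` has a
spanning face `P_w`: its flat can only be the span of `P_v`. Hence all these derivatives vanish at
`v`, and Euler's identity turns this into `f ∈ I_v ^ ord_P(L_v)`.
-/

section Derivation

variable {R A : Type*} [CommRing R] [CommRing A] [Algebra R A] (D : Derivation R A A)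

lemma derivation_mem_pow_pred {I : Ideal A} {e : ℕ} {a : A} (ha : a ∈ I ^ e) :
    D a ∈ I ^ (e - 1) := by
  induction e generalizing a with
  | zero => simp
  | succ e ih =>
    rw [pow_succ] at ha
    induction ha using Submodule.mul_induction_on' with
    | mem_mul_mem b hb c hc =>
      rw [D.leibniz, Nat.add_sub_cancel, smul_eq_mul, smul_eq_mul]
      refine add_mem (Ideal.mul_mem_right _ _ hb) ?_
      refine Ideal.pow_le_pow_right (by omega : e ≤ 1 + (e - 1)) ?_
      rw [pow_add, pow_one]
      exact Ideal.mul_mem_mul hc (ih hb)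
    | add b _ c _ hb hc => rw [map_add]; exact add_mem hb hc

lemma derivation_mem_pow_of_forall_mem {I : Ideal A} (hI : ∀ a ∈ I, D a ∈ I) {e : ℕ} {a : A}
    (ha : a ∈ I ^ e) : D a ∈ I ^ e := by
  induction e generalizing a with
  | zero => simp
  | succ e ih =>
    rw [pow_succ] at ha ⊢
    induction ha using Submodule.mul_induction_on' with
    | mem_mul_mem b hb c hc =>
      rw [D.leibniz, smul_eq_mul, smul_eq_mul, mul_comm c]
      exact add_mem (Ideal.mul_mem_mul hb (hI c hc)) (Ideal.mul_mem_mul (ih hb) hc)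
    | add b _ c _ hb hc => rw [map_add]; exact add_mem hb hc

lemma derivation_mem_span_of_forall_mem {s : Set A} (hs : ∀ a ∈ s, D a ∈ Ideal.span s) {a : A}
    (ha : a ∈ Ideal.span s) : D a ∈ Ideal.span s := by
  induction ha using Submodule.span_induction with
  | mem a ha => exact hs a ha
  | zero => simp
  | add a b _ _ ha hb => rw [map_add]; exact add_mem ha hb
  | smul r a ha' ha =>
    rw [smul_eq_mul, D.leibniz, smul_eq_mul, smul_eq_mul]
    exact add_mem (Ideal.mul_mem_left _ _ ha) (Ideal.mul_mem_right _ _ ha')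

end Derivation

section VanishingOrder

variable {σ R K : Type*} [CommRing R] [Field K]

/-- The ideal generated by the linear forms vanishing at `v`, so that its `e`-th power encodes
vanishing to order at least `e` at `v`; `pointIdealC v` is the case `R = ℂ` at a real point. -/
def linearVanishingIdeal (v : σ → R) : Ideal (MvPolynomial σ R) :=
  Ideal.span {p | p.IsHomogeneous 1 ∧ eval v p = 0}

/-- The derivative of a polynomial in the constant direction `v`. -/
def directionalDeriv (v : σ → R) : Derivation R (MvPolynomial σ R) (MvPolynomial σ R) :=
  mkDerivation R fun i => C (v i)

@[simp]
lemma directionalDeriv_X (v : σ → R) (i : σ) : directionalDeriv v (X i) = C (v i) :=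
  mkDerivation_X R _ i

lemma pderiv_directionalDeriv (v : σ → R) (i : σ) (f : MvPolynomial σ R) :
    pderiv i (directionalDeriv v f) = directionalDeriv v (pderiv i f) := by
  have hcomm : ⁅pderiv (R := R) i, directionalDeriv v⁆ = 0 := by
    ext j : 1
    by_cases h : j = i <;>
      simp [Derivation.commutator_apply, pderiv_X, h]
  simpa [Derivation.commutator_apply, sub_eq_zero] using congr($hcomm f)

lemma directionalDeriv_of_isHomogeneous_one (v : σ → R) {p : MvPolynomial σ R}
    (hp : p.IsHomogeneous 1) : directionalDeriv v p = C (eval v p) := by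
  rw [← mem_homogeneousSubmodule, homogeneousSubmodule_one_eq_span_X] at hp
  induction hp using Submodule.span_induction with
  | mem p hp => obtain ⟨i, rfl⟩ := hp; simp
  | zero => simp
  | add p q _ _ hp hq => simp [hp, hq]
  | smul c p _ hp => simp [hp, smul_eq_C_mul]

lemma directionalDeriv_mem_pow {v : σ → R} {e : ℕ} {f : MvPolynomial σ R}
    (hf : f ∈ linearVanishingIdeal v ^ e) : directionalDeriv v f ∈ linearVanishingIdeal v ^ e := by
  refine derivation_mem_pow_of_forall_mem _ (fun a ha => ?_) hf
  refine derivation_mem_span_of_forall_mem _ (fun p hp => ?_) ha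
  rw [directionalDeriv_of_isHomogeneous_one v hp.1, hp.2, map_zero]
  exact zero_mem _

lemma directionalDeriv_eq_sum [Fintype σ] (v : σ → R) (f : MvPolynomial σ R) :
    directionalDeriv v f = ∑ i, C (v i) * pderiv i f := by
  induction f using MvPolynomial.induction_on with
  | C a => simp
  | add p q hp hq => simp [hp, hq, mul_add, Finset.sum_add_distrib]
  | mul_X p j hp =>
    simp [Derivation.leibniz, hp, pderiv_X, Pi.single_apply, mul_add, Finset.sum_add_distrib,
      Finset.mul_sum, mul_left_comm, mul_comm p]

lemma eval_directionalDeriv_self [Finite σ] {v : σ → R} {f : MvPolynomial σ R} {D : ℕ}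
    (hf : f.IsHomogeneous D) : eval v (directionalDeriv v f) = D * eval v f := by
  cases nonempty_fintype σ
  simpa [directionalDeriv_eq_sum] using congrArg (eval v) hf.sum_X_mul_pderiv

lemma isHomogeneous_directionalDeriv [Finite σ] (v : σ → R) {f : MvPolynomial σ R} {D : ℕ}
    (hf : f.IsHomogeneous D) : (directionalDeriv v f).IsHomogeneous (D - 1) := by
  cases nonempty_fintype σ
  rw [directionalDeriv_eq_sum]
  exact .sum _ _ _ fun i _ => hf.pderiv.C_mul _

lemma eq_zero_of_isHomogeneous_zero_of_eval_eq_zero {v : σ → R} {f : MvPolynomial σ R}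
    (hf : f.IsHomogeneous 0) (hfv : eval v f = 0) : f = 0 := by
  rw [← totalDegree_zero_iff_isHomogeneous, totalDegree_eq_zero_iff_eq_C] at hf
  rw [hf, eval_C] at hfv
  rw [hf, hfv, map_zero]

/-- The restriction of a polynomial to the parametrized line `z ↦ v + z • u`. -/
def restrictLine (v u : σ → R) : MvPolynomial σ R →ₐ[R] Polynomial R :=
  aeval fun i => Polynomial.C (v i) + Polynomial.C (u i) * Polynomial.X

lemma eval_restrictLine (v u : σ → R) (z : R) (f : MvPolynomial σ R) :
    (restrictLine v u f).eval z = eval (v + z • u) f := by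
  have hcomp : (Polynomial.aeval z).comp (restrictLine v u) = aeval (v + z • u) := by
    ext i
    simp [restrictLine, mul_comm (u i)]
  simpa [Polynomial.coe_aeval_eq_eval, coe_aeval_eq_eval] using congr($hcomp f)

lemma natDegree_restrictLine_le (v u : σ → R) {f : MvPolynomial σ R} {D : ℕ}
    (hf : f.totalDegree ≤ D) : (restrictLine v u f).natDegree ≤ D := by
  have h := aeval_natDegree_le (n := 1) f hf
    (fun i => Polynomial.C (v i) + Polynomial.C (u i) * Polynomial.X) fun i => by compute_degree
  rwa [mul_one] at h

lemma X_sub_C_pow_dvd_restrictLine {v u : σ → R} {z : R} {e : ℕ} {f : MvPolynomial σ R}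
    (hf : f ∈ linearVanishingIdeal (v + z • u) ^ e) :
    (Polynomial.X - Polynomial.C z) ^ e ∣ restrictLine v u f := by
  have hle : (linearVanishingIdeal (v + z • u)).map (restrictLine v u) ≤
      Ideal.span {Polynomial.X - Polynomial.C z} := by
    rw [linearVanishingIdeal, Ideal.map_span, Ideal.span_le]
    rintro _ ⟨p, ⟨-, hp⟩, rfl⟩
    rwa [SetLike.mem_coe, Ideal.mem_span_singleton, Polynomial.dvd_iff_isRoot, Polynomial.IsRoot,
      eval_restrictLine]
  rw [← Ideal.mem_span_singleton, ← Ideal.span_singleton_pow]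
  refine Ideal.pow_right_mono hle e ?_
  rw [← Ideal.map_pow]
  exact Ideal.mem_map_of_mem _ hf

lemma exists_X_sub_mul_C_mem_linearVanishingIdeal (v : σ → K) :
    ∃ a : MvPolynomial σ K, ∀ i, X i - a * C (v i) ∈ linearVanishingIdeal v := by
  by_cases hv : v = 0
  · exact ⟨0, fun i => Ideal.subset_span ⟨by simpa using isHomogeneous_X K i, by simp [hv]⟩⟩
  · obtain ⟨j, hj : v j ≠ 0⟩ := Function.ne_iff.mp hv
    refine ⟨C (v j)⁻¹ * X j, fun i => Ideal.subset_span ⟨?_, by simp [hj]⟩⟩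
    rw [mul_right_comm, ← C_mul]
    exact (isHomogeneous_X K i).sub (isHomogeneous_C_mul_X _ j)

lemma mem_linearVanishingIdeal_pow_succ [Finite σ] [CharZero K] {v : σ → K} {f : MvPolynomial σ K}
    {D e : ℕ} (hf : f.IsHomogeneous D) (hfv : eval v f = 0)
    (hderiv : ∀ i, pderiv i f ∈ linearVanishingIdeal v ^ e) :
    f ∈ linearVanishingIdeal v ^ (e + 1) := by
  cases nonempty_fintype σ
  induction D generalizing f with
  | zero =>
    rw [eq_zero_of_isHomogeneous_zero_of_eval_eq_zero hf hfv]
    exact zero_mem _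
  | succ D ih =>
    have hdir : directionalDeriv v f ∈ linearVanishingIdeal v ^ (e + 1) := by
      refine ih (isHomogeneous_directionalDeriv v hf) ?_ fun i => ?_
      · rw [eval_directionalDeriv_self hf, hfv, mul_zero]
      · rw [pderiv_directionalDeriv]
        exact directionalDeriv_mem_pow (hderiv i)
    obtain ⟨a, ha⟩ := exists_X_sub_mul_C_mem_linearVanishingIdeal v
    have heuler : C ((D + 1 : ℕ) : K) * f =
        ∑ i, (X i - a * C (v i)) * pderiv i f + a * directionalDeriv v f := by
      rw [directionalDeriv_eq_sum, Finset.mul_sum, ← Finset.sum_add_distrib, map_natCast,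
        ← nsmul_eq_mul, ← hf.sum_X_mul_pderiv]
      exact Finset.sum_congr rfl fun i _ => by ring
    have hD : IsUnit (C ((D + 1 : ℕ) : K) : MvPolynomial σ K) :=
      (IsUnit.mk0 _ (Nat.cast_ne_zero.mpr D.succ_ne_zero)).map C
    rw [← Ideal.unit_mul_mem_iff_mem _ hD, heuler]
    refine add_mem (sum_mem fun i _ => ?_) (Ideal.mul_mem_left _ _ hdir)
    rw [pow_succ']
    exact Ideal.mul_mem_mul (ha i) (hderiv i)

lemma eval_eq_zero_of_totalDegree_lt_sum_order {v u : σ → K} {f : MvPolynomial σ K} {Z : Finset K}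
    {E : K → ℕ} (hE : ∀ z ∈ Z, f ∈ linearVanishingIdeal (v + z • u) ^ E z)
    (hdeg : f.totalDegree < ∑ z ∈ Z, E z) : eval v f = 0 := by
  have hdvd : ∏ z ∈ Z, (Polynomial.X - Polynomial.C z) ^ E z ∣ restrictLine v u f :=
    Finset.prod_dvd_of_coprime
      (fun a _ b _ hab => (Polynomial.pairwise_coprime_X_sub_C Function.injective_id hab).pow)
      fun z hz => X_sub_C_pow_dvd_restrictLine (hE z hz)
  have hprod : (∏ z ∈ Z, (Polynomial.X - Polynomial.C z) ^ E z).natDegree = ∑ z ∈ Z, E z := by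
    rw [Polynomial.natDegree_prod_of_monic _ _ fun z _ => (Polynomial.monic_X_sub_C z).pow _]
    simp
  have hzero : restrictLine v u f = 0 := Polynomial.eq_zero_of_dvd_of_natDegree_lt hdvd <| by
    rw [hprod]
    exact (natDegree_restrictLine_le v u le_rfl).trans_lt hdeg
  simpa [hzero] using (eval_restrictLine v u 0 f).symm

/-- Each differentiation costs one in the degree and at most one in each of the orders on the
line. -/
lemma mem_linearVanishingIdeal_pow_of_line [Finite σ] [CharZero K] {v u : σ → K}
    {f : MvPolynomial σ K} {D e : ℕ} {Z : Finset K} {E : K → ℕ} (hf : f.IsHomogeneous D)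
    (hE : ∀ z ∈ Z, f ∈ linearVanishingIdeal (v + z • u) ^ E z)
    (hdeg : ∀ k < e, D < k + ∑ z ∈ Z, (E z - k)) :
    f ∈ linearVanishingIdeal v ^ e := by
  induction e generalizing D f E with
  | zero => simp
  | succ e ih =>
    have hfv : eval v f = 0 := eval_eq_zero_of_totalDegree_lt_sum_order hE <|
      hf.totalDegree_le.trans_lt (by simpa using hdeg 0 e.succ_pos)
    rcases D with _ | D
    · rw [eq_zero_of_isHomogeneous_zero_of_eval_eq_zero hf hfv]
      exact zero_mem _
    refine mem_linearVanishingIdeal_pow_succ hf hfv fun i => ?_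
    refine ih hf.pderiv (fun z hz => derivation_mem_pow_pred _ (hE z hz)) fun k hk => ?_
    have hsum := hdeg (k + 1) (by omega)
    simp only [Nat.sub_sub, add_comm 1 k]
    omega

end VanishingOrder

section Arrangement

variable {K V ι : Type*} [Field K] [AddCommGroup V] [Module K V]

lemma finrank_inf_ker_add_one [FiniteDimensional K V] {W : Submodule K V} {ψ : Module.Dual K V}
    {x : V} (hx : x ∈ W) (hψ : ψ x ≠ 0) :
    Module.finrank K ↥(W ⊓ LinearMap.ker ψ) + 1 = Module.finrank K W := by
  have hne : ψ.domRestrict W ≠ 0 := fun h => hψ congr($h ⟨x, hx⟩)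
  rw [← Module.Dual.finrank_ker_add_one_of_ne_zero hne, LinearMap.ker_domRestrict,
    ← Submodule.map_comap_subtype, Submodule.finrank_map_subtype_eq]

lemma vectorSpan_eq_span_inf_ker {h : Module.Dual K V} {S : Set V} (hS : ∀ x ∈ S, h x = 1) :
    vectorSpan K S = Submodule.span K S ⊓ LinearMap.ker h := by
  apply le_antisymm
  · rw [vectorSpan_def, Submodule.span_le]
    rintro _ ⟨a, ha, b, hb, rfl⟩
    refine ⟨sub_mem (Submodule.subset_span ha) (Submodule.subset_span hb), ?_⟩
    simp [hS a ha, hS b hb]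
  · rintro x ⟨hxS, hx : h x = 0⟩
    obtain rfl | ⟨p, hp⟩ := S.eq_empty_or_nonempty
    · simpa using hxS
    · suffices hsub : x - h x • p ∈ vectorSpan K S by simpa [hx] using hsub
      clear hx
      induction hxS using Submodule.span_induction with
      | mem y hy => simpa [hS y hy] using vsub_mem_vectorSpan K hy hp
      | zero => simp
      | add y z _ _ hy hz => convert add_mem hy hz using 1; rw [map_add]; module
      | smul c y _ hy => convert Submodule.smul_mem _ c hy using 1; rw [map_smul]; module

lemma finrank_span_eq_finrank_vectorSpan_add_one [FiniteDimensional K V] {h : Module.Dual K V}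
    {S : Set V} (hne : S.Nonempty) (hS : ∀ x ∈ S, h x = 1) :
    Module.finrank K (Submodule.span K S) = Module.finrank K (vectorSpan K S) + 1 := by
  obtain ⟨p, hp⟩ := hne
  rw [vectorSpan_eq_span_inf_ker hS,
    finrank_inf_ker_add_one (Submodule.subset_span hp) (by simp [hS p hp])]

/-- The intersection of the hyperplanes `φ i = 0` through `v`: the linear subspace whose
projectivization is `L_v`. -/
def flatSpace (φ : ι → Module.Dual K V) (v : V) : Submodule K V :=
  (Submodule.span K (φ '' {i | φ i v = 0})).dualCoannihilator

variable {φ : ι → Module.Dual K V} {u v x : V}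

lemma mem_flatSpace : x ∈ flatSpace φ v ↔ ∀ i, φ i v = 0 → φ i x = 0 := by
  rw [← SetLike.mem_coe, flatSpace, Submodule.coe_dualCoannihilator_span]
  simp

lemma self_mem_flatSpace (φ : ι → Module.Dual K V) (v : V) : v ∈ flatSpace φ v :=
  mem_flatSpace.mpr fun _ => id

lemma finrank_flatSpace_pos [FiniteDimensional K V] (φ : ι → Module.Dual K V) (hv : v ≠ 0) :
    0 < Module.finrank K (flatSpace φ v) :=
  Submodule.one_le_finrank_iff.mpr <|
    (Submodule.ne_bot_iff _).mpr ⟨v, self_mem_flatSpace φ v, hv⟩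

lemma flatSpace_zero (hess : ∀ x, (∀ i, φ i x = 0) → x = 0) : flatSpace φ 0 = ⊥ :=
  (Submodule.eq_bot_iff _).mpr fun x hx =>
    hess x fun i => mem_flatSpace.mp hx i (map_zero _)

lemma exists_mem_forall_eq_zero_imp [Infinite K] [Finite ι] (W : Submodule K V)
    (ψ : ι → Module.Dual K V) : ∃ u ∈ W, ∀ i, ψ i u = 0 → ∀ x ∈ W, ψ i x = 0 := by
  obtain ⟨u, hu, hne⟩ := Module.Dual.exists_forall_mem_ne_zero_of_forall_exists W
    (fun i : {i // ∃ x ∈ W, ψ i x ≠ 0} => ψ i) fun i => i.2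
  refine ⟨u, hu, fun i hi => ?_⟩
  by_contra! hx
  exact hne ⟨i, hx⟩ hi

/-- The line `z ↦ v + z • u` lies in `flatSpace φ v`, meets every hyperplane not through `v`, and
meets two of them in the same point only if they have the same trace on `flatSpace φ v`. -/
structure IsGenericDirection (φ : ι → Module.Dual K V) (v u : V) : Prop where
  mem_flatSpace : u ∈ flatSpace φ v
  eq_zero_of_eq_zero : ∀ i, φ i u = 0 → φ i v = 0
  proportional : ∀ i j, φ j v * φ i u = φ i v * φ j u →
    ∀ x ∈ flatSpace φ v, φ j v * φ i x = φ i v * φ j x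

lemma exists_isGenericDirection [Infinite K] [Finite ι] (φ : ι → Module.Dual K V) (v : V) :
    ∃ u, IsGenericDirection φ v u := by
  obtain ⟨u, hu, hgen⟩ := exists_mem_forall_eq_zero_imp (flatSpace φ v)
    (Sum.elim φ fun p : ι × ι => φ p.2 v • φ p.1 - φ p.1 v • φ p.2)
  refine ⟨u, hu, fun i hi => hgen (.inl i) hi v (self_mem_flatSpace φ v), fun i j hij x hx => ?_⟩
  have := hgen (.inr (i, j)) (by simpa [sub_eq_zero] using hij) x hx
  simpa [sub_eq_zero] using this

lemma apply_add_smul_eq_zero (hu : u ∈ flatSpace φ v) {i : ι} (hi : φ i v = 0) (z : K) :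
    φ i (v + z • u) = 0 := by
  simp [hi, mem_flatSpace.mp hu i hi]

lemma flatSpace_add_smul (hu : IsGenericDirection φ v u) {j : ι} {z : K} (hj : φ j v ≠ 0)
    (hz : φ j (v + z • u) = 0) :
    flatSpace φ (v + z • u) = flatSpace φ v ⊓ LinearMap.ker (φ j) := by
  ext x
  rw [Submodule.mem_inf, LinearMap.mem_ker, mem_flatSpace]
  constructor
  · intro hx
    exact ⟨mem_flatSpace.mpr fun i hi => hx i (apply_add_smul_eq_zero hu.mem_flatSpace hi z),
      hx j hz⟩
  · rintro ⟨hx, hjx⟩ i hi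
    simp only [map_add, map_smul, smul_eq_mul] at hi hz
    have hij : φ j v * φ i u = φ i v * φ j u := by
      linear_combination φ i u * hz - φ j u * hi
    have hprop := hu.proportional i j hij x hx
    rw [hjx, mul_zero] at hprop
    exact (mul_eq_zero.mp hprop).resolve_left hj

lemma eq_of_apply_add_smul_eq_zero {j : ι} {z w : K} (hj : φ j v ≠ 0)
    (hz : φ j (v + z • u) = 0) (hw : φ j (v + w • u) = 0) : z = w := by
  simp only [map_add, map_smul, smul_eq_mul] at hz hw
  have hu : φ j u ≠ 0 := fun h => hj (by simpa [h] using hz)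
  exact mul_right_cancel₀ hu (by linear_combination hz - hw)

lemma neg_div_eq_iff_apply_add_smul_eq_zero (hu : IsGenericDirection φ v u) {i : ι} {z : K}
    (hi : φ i v ≠ 0) : -φ i v / φ i u = z ↔ φ i (v + z • u) = 0 := by
  rw [div_eq_iff fun h => hi (hu.eq_zero_of_eq_zero i h), neg_eq_iff_add_eq_zero, map_add, map_smul,
    smul_eq_mul]

variable [Fintype ι]

/-- The parameters at which the line `z ↦ v + z • u` meets the hyperplanes of `φ` not through `v`,
provided `u` lies on none of these hyperplanes (otherwise the division gives a junk value). -/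
def crossings (φ : ι → Module.Dual K V) (v u : V) : Finset K :=
  image (fun i => -φ i v / φ i u) {i | φ i v ≠ 0}

lemma mem_crossings (hu : IsGenericDirection φ v u) {z : K} :
    z ∈ crossings φ v u ↔ ∃ i, φ i v ≠ 0 ∧ φ i (v + z • u) = 0 := by
  simp only [crossings, mem_image, mem_filter, mem_univ, true_and]
  exact exists_congr fun i => and_congr_right fun hi =>
    neg_div_eq_iff_apply_add_smul_eq_zero hu hi

lemma finrank_flatSpace_add_one [FiniteDimensional K V] (hu : IsGenericDirection φ v u) {z : K}
    (hz : z ∈ crossings φ v u) :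
    Module.finrank K (flatSpace φ (v + z • u)) + 1 = Module.finrank K (flatSpace φ v) := by
  obtain ⟨j, hj, hjz⟩ := (mem_crossings hu).mp hz
  rw [flatSpace_add_smul hu hj hjz, finrank_inf_ker_add_one (self_mem_flatSpace φ v) hj]

lemma crossings_nonempty (hess : ∀ x, (∀ i, φ i x = 0) → x = 0) (hv : v ≠ 0) (u : V) :
    (crossings φ v u).Nonempty := by
  rw [crossings, image_nonempty, filter_nonempty_iff]
  by_contra! hzero
  exact hv (hess v fun i => hzero i (mem_univ i))

lemma add_smul_ne_zero_of_mem_crossings [FiniteDimensional K V]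
    (hess : ∀ x, (∀ i, φ i x = 0) → x = 0) (hu : IsGenericDirection φ v u)
    (hdim : 1 < Module.finrank K (flatSpace φ v)) {z : K} (hz : z ∈ crossings φ v u) :
    v + z • u ≠ 0 := by
  intro hzero
  have hcodim := finrank_flatSpace_add_one hu hz
  rw [hzero, flatSpace_zero hess, finrank_bot] at hcodim
  omega

lemma injOn_flatSpace_crossings (hu : IsGenericDirection φ v u) :
    Set.InjOn (fun z : K => flatSpace φ (v + z • u)) (crossings φ v u : Set K) := by
  intro z _ w hw (hzw : flatSpace φ (v + z • u) = flatSpace φ (v + w • u))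
  obtain ⟨j, hj, hjw⟩ := (mem_crossings hu).mp hw
  have hmem : v + z • u ∈ flatSpace φ (v + w • u) := hzw ▸ self_mem_flatSpace φ _
  exact eq_of_apply_add_smul_eq_zero hj (mem_flatSpace.mp hmem j hjw) hjw

lemma sum_card_apply_eq_zero_add (hu : IsGenericDirection φ v u) :
    ∑ z ∈ crossings φ v u, #{i | φ i (v + z • u) = 0} + #{i | φ i v = 0} =
      Fintype.card ι + #(crossings φ v u) * #{i | φ i v = 0} := by
  have hsplit (z : K) : #{i | φ i (v + z • u) = 0} =
      #{i | φ i v = 0} + #{i ∈ {i | φ i v ≠ 0} | φ i (v + z • u) = 0} := by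
    rw [← card_filter_add_card_filter_not (s := {i | φ i (v + z • u) = 0}) fun i => φ i v = 0,
      filter_comm, filter_comm (p := fun i => φ i (v + z • u) = 0)]
    congr 2
    refine filter_eq_self.mpr fun i hi => ?_
    exact apply_add_smul_eq_zero hu.mem_flatSpace (mem_filter.mp hi).2 z
  have hfibers : ∑ z ∈ crossings φ v u, #{i ∈ {i | φ i v ≠ 0} | φ i (v + z • u) = 0} =
      #{i | φ i v ≠ 0} := by
    rw [crossings, card_eq_sum_card_image (fun i => -φ i v / φ i u)]
    refine sum_congr rfl fun z _ => congrArg card (filter_congr fun i hi => ?_)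
    exact (neg_div_eq_iff_apply_add_smul_eq_zero hu (mem_filter.mp hi).2).symm
  have htotal : #{i | φ i v = 0} + #{i | φ i v ≠ 0} = Fintype.card ι :=
    card_filter_add_card_filter_not _
  simp only [hsplit, sum_add_distrib, sum_const, smul_eq_mul, hfibers, ← htotal]
  ring

end Arrangement

section LinearForm

variable {σ R K ι : Type*} [CommRing R] [Field K]

lemma exists_dual_apply_eq_eval {p : MvPolynomial σ R} (hp : p.IsHomogeneous 1) :
    ∃ ψ : Module.Dual R (σ → R), ∀ x, ψ x = eval x p := by
  rw [← mem_homogeneousSubmodule, homogeneousSubmodule_one_eq_span_X] at hp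
  induction hp using Submodule.span_induction with
  | mem p hp =>
    obtain ⟨i, rfl⟩ := hp
    exact ⟨LinearMap.proj i, by simp⟩
  | zero => exact ⟨0, by simp⟩
  | add p q _ _ hp hq =>
    obtain ⟨⟨ψ, hψ⟩, χ, hχ⟩ := And.intro hp hq
    exact ⟨ψ + χ, by simp [hψ, hχ]⟩
  | smul c p _ hp =>
    obtain ⟨ψ, hψ⟩ := hp
    exact ⟨c • ψ, by simp [hψ]⟩

lemma finrank_span_image_eq_of_apply_eq_eval [Infinite K] {p : ι → MvPolynomial σ K}
    {φ : ι → Module.Dual K (σ → K)} (hφ : ∀ i x, φ i x = eval x (p i)) (s : Set ι) :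
    Module.finrank K (Submodule.span K (p '' s)) =
      Module.finrank K (Submodule.span K (φ '' s)) := by
  let evalMap : MvPolynomial σ K →ₗ[K] (σ → K) → K := LinearMap.pi fun x => (aeval x).toLinearMap
  have hevalMap : Function.Injective evalMap := fun p q hpq =>
    MvPolynomial.funext fun x => by simpa [evalMap, coe_aeval_eq_eval] using congrFun hpq x
  have hcoe : Function.Injective (LinearMap.ltoFun K (σ → K) K K) := DFunLike.coe_injective
  have hcomp : evalMap ∘ p = LinearMap.ltoFun K (σ → K) K K ∘ φ := by
    ext i x
    simp [evalMap, hφ]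
  rw [(Submodule.equivMapOfInjective _ hevalMap _).finrank_eq,
    (Submodule.equivMapOfInjective _ hcoe _).finrank_eq, Submodule.map_span, Submodule.map_span,
    ← Set.image_comp, ← Set.image_comp, hcomp]

end LinearForm

section Homogenization

variable {n : ℕ}

/-- `lift1` as an affine map. -/
def lift1Affine (n : ℕ) : (Fin n → ℝ) →ᵃ[ℝ] (Fin (n + 1) → ℝ) where
  toFun := lift1
  linear := LinearMap.vecCons 0 LinearMap.id
  map_vadd' y w := by
    ext i
    cases i using Fin.cases <;> simp [lift1]

lemma finrank_span_lift1_image {S : Set (Fin n → ℝ)} (hS : S.Nonempty) :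
    Module.finrank ℝ (Submodule.span ℝ (lift1 '' S)) =
      Module.finrank ℝ (affineSpan ℝ S).direction + 1 := by
  have hinj : Function.Injective (lift1Affine n).linear := fun y w h => congrArg Fin.tail h
  rw [finrank_span_eq_finrank_vectorSpan_add_one (h := LinearMap.proj 0) (hS.image _)
    (by rintro _ ⟨y, -, rfl⟩; simp [lift1]), direction_affineSpan,
    (Submodule.equivMapOfInjective _ hinj _).finrank_eq, AffineMap.map_vectorSpan]
  rfl

end Homogenization

section Polytope

variable {n d : ℕ} {ℓ : Fin d → MvPolynomial (Fin (n + 1)) ℝ}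
  {φ : Fin d → Module.Dual ℝ (Fin (n + 1) → ℝ)} {u v : Fin (n + 1) → ℝ}

lemma eq_zero_of_forall_add_smul_mem {E : Type*} [NormedAddCommGroup E] [NormedSpace ℝ E]
    {S : Set E} (hS : Bornology.IsBounded S) {a w : E} (hray : ∀ t : ℝ, 0 ≤ t → a + t • w ∈ S) :
    w = 0 := by
  obtain ⟨B, hB⟩ := hS.exists_norm_le
  by_contra hw
  obtain ⟨k, hk⟩ := exists_lt_nsmul (norm_pos_iff.mpr hw) (B + ‖a‖)
  have hnorm : k • ‖w‖ ≤ B + ‖a‖ := calc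
    k • ‖w‖ = ‖(a + (k : ℝ) • w) - a‖ := by simp [norm_smul]
    _ ≤ B + ‖a‖ := (norm_sub_le _ _).trans (by gcongr; exact hB _ (hray k k.cast_nonneg))
  exact hk.not_ge hnorm

lemma smul_eq_tail_of_forall_apply_eq_zero (hφ : ∀ i x, φ i x = eval x (ℓ i))
    (hbdd : Bornology.IsBounded (polytopeOf ℓ)) {x : Fin (n + 1) → ℝ} (hx : ∀ i, φ i x = 0)
    (hx0 : 0 ≤ x 0) {y : Fin n → ℝ} (hy : y ∈ polytopeOf ℓ) : x 0 • y = Fin.tail x := by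
  refine sub_eq_zero.mp (eq_zero_of_forall_add_smul_mem hbdd (a := y) fun t ht i => ?_)
  have hlift : lift1 (y + t • (x 0 • y - Fin.tail x)) = (1 + t * x 0) • lift1 y - t • x := by
    ext i
    cases i using Fin.cases with
    | zero => simp [lift1]
    | succ j => simp [lift1, Fin.tail]; ring
  rw [hlift, ← hφ, map_sub, map_smul, map_smul, hx, smul_zero, sub_zero, hφ]
  exact mul_nonneg (by positivity) (hy i)

lemma eq_zero_of_forall_eval_eq_zero [NeZero n] (hhom : ∀ i, (ℓ i).IsHomogeneous 1)
    (hbdd : Bornology.IsBounded (polytopeOf ℓ)) (hfull : affineSpan ℝ (polytopeOf ℓ) = ⊤)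
    {x : Fin (n + 1) → ℝ} (hx : ∀ i, eval x (ℓ i) = 0) : x = 0 := by
  choose φ hφ using fun i => exists_dual_apply_eq_eval (hhom i)
  simp only [← hφ] at hx
  wlog hx0 : 0 ≤ x 0 generalizing x
  · exact neg_eq_zero.mp (this (x := -x) (by simpa using hx) (by simpa using (not_le.mp hx0).le))
  have htail : ∀ y ∈ polytopeOf ℓ, x 0 • y = Fin.tail x :=
    fun y => smul_eq_tail_of_forall_apply_eq_zero hφ hbdd hx hx0
  rcases eq_or_ne (x 0) 0 with h0 | h0
  · obtain ⟨y, hy⟩ : (polytopeOf ℓ).Nonempty := by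
      rw [← affineSpan_nonempty ℝ, hfull]
      exact Set.univ_nonempty
    have htail0 : Fin.tail x = 0 := by rw [← htail y hy, h0, zero_smul]
    ext i
    cases i using Fin.cases with
    | zero => exact h0
    | succ j => exact congrFun htail0 j
  · have hsub : (polytopeOf ℓ).Subsingleton := fun y hy w hw =>
      smul_right_injective _ h0 ((htail y hy).trans (htail w hw).symm)
    have := AffineSubspace.subsingleton_of_subsingleton_span_eq_top hsub hfull
    exact (not_subsingleton (Fin n → ℝ) this).elim

lemma flatOf_eq_filter (hφ : ∀ i x, φ i x = eval x (ℓ i)) (v : Fin (n + 1) → ℝ) :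
    flatOf ℓ v = ({i | φ i v = 0} : Finset (Fin d)) := by
  simp only [flatOf, hφ]

lemma rkOf_add_finrank_flatSpace (hφ : ∀ i x, φ i x = eval x (ℓ i)) (v : Fin (n + 1) → ℝ) :
    rkOf ℓ v + Module.finrank ℝ (flatSpace φ v) = n + 1 := by
  rw [rkOf, finrank_span_image_eq_of_apply_eq_eval hφ, flatOf_eq_filter hφ, coe_filter_univ,
    flatSpace, Subspace.finrank_add_finrank_dualCoannihilator_eq, Module.finrank_fin_fun]

lemma rkOf_le_card_flatOf (ℓ : Fin d → MvPolynomial (Fin (n + 1)) ℝ) (v : Fin (n + 1) → ℝ) :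
    rkOf ℓ v ≤ #(flatOf ℓ v) := by
  rw [rkOf, ← coe_image]
  exact (finrank_span_finset_le_card _).trans card_image_le

/-- The linear span of the homogenization of the face `P_v`. -/
def faceSpan (ℓ : Fin d → MvPolynomial (Fin (n + 1)) ℝ) (v : Fin (n + 1) → ℝ) :
    Submodule ℝ (Fin (n + 1) → ℝ) :=
  Submodule.span ℝ (lift1 '' faceOf ℓ v)

/-- The condition in the definition of `ord_P(L_v)`: the face `P_v` spans the flat `L_v`. -/
def IsFullFace (ℓ : Fin d → MvPolynomial (Fin (n + 1)) ℝ) (v : Fin (n + 1) → ℝ) : Prop :=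
  (faceOf ℓ v).Nonempty ∧
    Module.finrank ℝ (affineSpan ℝ (faceOf ℓ v)).direction = n - rkOf ℓ v

/-- The amount by which `ord_P(L_v)` exceeds the nullity of the flat. -/
def faceDefect (ℓ : Fin d → MvPolynomial (Fin (n + 1)) ℝ) (v : Fin (n + 1) → ℝ) : ℕ :=
  if IsFullFace ℓ v then 0 else 1

lemma ordOf_add_rkOf (ℓ : Fin d → MvPolynomial (Fin (n + 1)) ℝ) (v : Fin (n + 1) → ℝ) :
    ordOf ℓ v + rkOf ℓ v = #(flatOf ℓ v) + faceDefect ℓ v := by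
  have hord : ordOf ℓ v = nlOf ℓ v + faceDefect ℓ v := by
    unfold ordOf faceDefect IsFullFace
    split_ifs <;> rfl
  have hrk := rkOf_le_card_flatOf ℓ v
  rw [hord, nlOf]
  omega

lemma faceSpan_le_flatSpace (hφ : ∀ i x, φ i x = eval x (ℓ i)) (v : Fin (n + 1) → ℝ) :
    faceSpan ℓ v ≤ flatSpace φ v := by
  rw [faceSpan, Submodule.span_le]
  rintro _ ⟨y, hy, rfl⟩
  refine mem_flatSpace.mpr fun i hi => ?_
  rw [hφ]
  exact hy.2 i (by simpa [flatOf, hφ] using hi)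

lemma faceSpan_mono {w : Fin (n + 1) → ℝ} (h : flatOf ℓ v ⊆ flatOf ℓ w) :
    faceSpan ℓ w ≤ faceSpan ℓ v :=
  Submodule.span_mono <| Set.image_mono fun _ hy => ⟨hy.1, fun i hi => hy.2 i (h hi)⟩

lemma isFullFace_iff_faceSpan_eq_flatSpace (hφ : ∀ i x, φ i x = eval x (ℓ i)) (hv : v ≠ 0) :
    IsFullFace ℓ v ↔ faceSpan ℓ v = flatSpace φ v := by
  have hrk := rkOf_add_finrank_flatSpace hφ v
  have hpos := finrank_flatSpace_pos φ hv
  rcases (faceOf ℓ v).eq_empty_or_nonempty with hempty | hne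
  · have hbot : faceSpan ℓ v = ⊥ := by simp [faceSpan, hempty]
    have hnot : ¬ IsFullFace ℓ v := fun h => h.1.ne_empty hempty
    simp only [hnot, false_iff, hbot]
    exact (Submodule.one_le_finrank_iff.mp hpos).symm
  · have hspan : Module.finrank ℝ (faceSpan ℓ v) = _ := finrank_span_lift1_image hne
    constructor
    · intro h
      have hdir := h.2
      exact Submodule.eq_of_le_of_finrank_eq (faceSpan_le_flatSpace hφ v) (by omega)
    · intro h
      rw [h] at hspan
      exact ⟨hne, by omega⟩

lemma flatSpace_eq_faceSpan (hφ : ∀ i x, φ i x = eval x (ℓ i)) (hv : v ≠ 0)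
    (hu : IsGenericDirection φ v u) {z : ℝ} (hz : z ∈ crossings φ v u) (hzu : v + z • u ≠ 0)
    (hdef : ¬ IsFullFace ℓ v) (hfull : IsFullFace ℓ (v + z • u)) :
    flatSpace φ (v + z • u) = faceSpan ℓ v := by
  have hlt : faceSpan ℓ v < flatSpace φ v := (faceSpan_le_flatSpace hφ v).lt_of_ne <|
    mt (isFullFace_iff_faceSpan_eq_flatSpace hφ hv).mpr hdef
  have hflat : flatOf ℓ v ⊆ flatOf ℓ (v + z • u) := by
    rw [flatOf_eq_filter hφ, flatOf_eq_filter hφ]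
    exact monotone_filter_right _ fun i _ hi => apply_add_smul_eq_zero hu.mem_flatSpace hi z
  have hle : flatSpace φ (v + z • u) ≤ faceSpan ℓ v :=
    ((isFullFace_iff_faceSpan_eq_flatSpace hφ hzu).mp hfull).ge.trans (faceSpan_mono hflat)
  have hcodim := finrank_flatSpace_add_one hu hz
  have hrank := Submodule.finrank_lt_finrank_of_lt hlt
  exact Submodule.eq_of_le_of_finrank_le hle (by omega)

lemma card_crossings_mul_faceDefect_le (hφ : ∀ i x, φ i x = eval x (ℓ i)) (hv : v ≠ 0)
    (hu : IsGenericDirection φ v u) (hzu : ∀ z ∈ crossings φ v u, v + z • u ≠ 0) :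
    #(crossings φ v u) * faceDefect ℓ v ≤
      ∑ z ∈ crossings φ v u, faceDefect ℓ (v + z • u) + faceDefect ℓ v := by
  by_cases hfull : IsFullFace ℓ v
  · simp [faceDefect, hfull]
  have hone : #{z ∈ crossings φ v u | IsFullFace ℓ (v + z • u)} ≤ 1 := by
    rw [card_le_one]
    intro z hz w hw
    rw [mem_filter] at hz hw
    refine injOn_flatSpace_crossings hu hz.1 hw.1 ?_
    exact (flatSpace_eq_faceSpan hφ hv hu hz.1 (hzu z hz.1) hfull hz.2).trans
      (flatSpace_eq_faceSpan hφ hv hu hw.1 (hzu w hw.1) hfull hw.2).symm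
  have hsum : ∑ z ∈ crossings φ v u, faceDefect ℓ (v + z • u) =
      #{z ∈ crossings φ v u | ¬ IsFullFace ℓ (v + z • u)} := by
    simp only [faceDefect, card_filter, ite_not]
  have hsplit := card_filter_add_card_filter_not (s := crossings φ v u)
    fun z => IsFullFace ℓ (v + z • u)
  rw [hsum, faceDefect, if_neg hfull]
  omega

lemma degree_lt_add_sum_ordOf_sub (hφ : ∀ i x, φ i x = eval x (ℓ i)) (hv : v ≠ 0)
    (hu : IsGenericDirection φ v u) (hzu : ∀ z ∈ crossings φ v u, v + z • u ≠ 0)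
    (hcross : (crossings φ v u).Nonempty) (hrk : rkOf ℓ v < n) (hnd : n + 1 ≤ d)
    {k : ℕ} (hk : k < ordOf ℓ v) :
    d - n - 1 < k + ∑ z ∈ crossings φ v u, (ordOf ℓ (v + z • u) - k) := by
  have hordz : ∀ z ∈ crossings φ v u, #(flatOf ℓ (v + z • u)) + faceDefect ℓ (v + z • u) ≤
      (ordOf ℓ (v + z • u) - k) + (k + rkOf ℓ v + 1) := by
    intro z hz
    have hcodim := finrank_flatSpace_add_one hu hz
    have hrkz := rkOf_add_finrank_flatSpace hφ (v + z • u)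
    have hrkv := rkOf_add_finrank_flatSpace hφ v
    have hord := ordOf_add_rkOf ℓ (v + z • u)
    omega
  have hsum := sum_le_sum hordz
  simp only [sum_add_distrib, sum_const, smul_eq_mul] at hsum
  have hcard : ∑ z ∈ crossings φ v u, #(flatOf ℓ (v + z • u)) + #(flatOf ℓ v) =
      d + #(crossings φ v u) * #(flatOf ℓ v) := by
    simpa only [flatOf_eq_filter hφ, Fintype.card_fin] using sum_card_apply_eq_zero_add hu
  have hdefect := card_crossings_mul_faceDefect_le hφ hv hu hzu
  have hordv := ordOf_add_rkOf ℓ v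
  obtain ⟨s, hs⟩ := Nat.exists_eq_add_of_lt hk
  have hpos : s ≤ #(crossings φ v u) * s := Nat.le_mul_of_pos_left _ hcross.card_pos
  have hscale : #(crossings φ v u) * #(flatOf ℓ v) + #(crossings φ v u) * faceDefect ℓ v =
      #(crossings φ v u) * k + #(crossings φ v u) * rkOf ℓ v + #(crossings φ v u) +
        #(crossings φ v u) * s := by
    rw [← mul_add, (by omega : #(flatOf ℓ v) + faceDefect ℓ v = k + rkOf ℓ v + 1 + s)]
    ring
  omega

lemma mem_pointIdealC_pow_of_line {f : MvPolynomial (Fin (n + 1)) ℂ} {D e : ℕ} {Z : Finset ℝ}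
    {E : ℝ → ℕ} (hf : f.IsHomogeneous D) (hE : ∀ z ∈ Z, f ∈ pointIdealC (v + z • u) ^ E z)
    (hdeg : ∀ k < e, D < k + ∑ z ∈ Z, (E z - k)) : f ∈ pointIdealC v ^ e := by
  refine mem_linearVanishingIdeal_pow_of_line (u := fun i => (u i : ℂ))
    (Z := Z.map ⟨_, Complex.ofReal_injective⟩) (E := fun z => E z.re) hf ?_ (by simpa using hdeg)
  intro _ hmap
  obtain ⟨z, hz, rfl⟩ := mem_map.mp hmap
  have hpoint : (fun i => ((v + z • u) i : ℂ)) =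
      (fun i => (v i : ℂ)) + (z : ℂ) • fun i => (u i : ℂ) := by
    ext i
    simp
  have hmem := hE z hz
  rwa [pointIdealC, hpoint] at hmem

lemma mem_pointIdealC_pow_of_rkOf_succ (hφ : ∀ i x, φ i x = eval x (ℓ i))
    (hess : ∀ x, (∀ i, φ i x = 0) → x = 0) (hnd : n + 1 ≤ d) {f : MvPolynomial (Fin (n + 1)) ℂ}
    (hf : f.IsHomogeneous (d - n - 1)) (hv : v ≠ 0) (hrk : rkOf ℓ v < n)
    (hsucc : ∀ w : Fin (n + 1) → ℝ, w ≠ 0 → rkOf ℓ w = rkOf ℓ v + 1 →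
      f ∈ pointIdealC w ^ ordOf ℓ w) :
    f ∈ pointIdealC v ^ ordOf ℓ v := by
  obtain ⟨u, hu⟩ := exists_isGenericDirection φ v
  have hrkv := rkOf_add_finrank_flatSpace hφ v
  have hzu : ∀ z ∈ crossings φ v u, v + z • u ≠ 0 := fun z hz =>
    add_smul_ne_zero_of_mem_crossings hess hu (by omega) hz
  refine mem_pointIdealC_pow_of_line (E := fun z => ordOf ℓ (v + z • u)) hf
    (fun z hz => hsucc _ (hzu z hz) ?_) fun k hk =>
      degree_lt_add_sum_ordOf_sub hφ hv hu hzu (crossings_nonempty hess hv u) hrk hnd hk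
  have hcodim := finrank_flatSpace_add_one hu hz
  have hrkz := rkOf_add_finrank_flatSpace hφ (v + z • u)
  omega

end Polytope

theorem adjoint_reduction_to_dimension_zero_general {n d : ℕ}
    (ℓ : Fin d → MvPolynomial (Fin (n + 1)) ℝ) (hhom : ∀ i, (ℓ i).IsHomogeneous 1)
    (hess : ∀ x, (∀ i, eval x (ℓ i) = 0) → x = 0)
    (f : MvPolynomial (Fin (n + 1)) ℂ) (hf : f.IsHomogeneous (d - n - 1))
    (hvan : ∀ v : Fin (n + 1) → ℝ, v ≠ 0 → rkOf ℓ v = n →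
      f ∈ pointIdealC v ^ ordOf ℓ v) :
    ∀ v : Fin (n + 1) → ℝ, v ≠ 0 → f ∈ pointIdealC v ^ ordOf ℓ v := by
  choose φ hφ using fun i => exists_dual_apply_eq_eval (hhom i)
  simp only [← hφ] at hess
  have hnd : n + 1 ≤ d := by
    have hrk := rkOf_add_finrank_flatSpace hφ 0
    rw [flatSpace_zero hess, finrank_bot] at hrk
    exact hrk.ge.trans <| (rkOf_le_card_flatOf ℓ 0).trans <| card_finset_fin_le _
  intro v hv
  have hrk : rkOf ℓ v ≤ n := by
    have := rkOf_add_finrank_flatSpace hφ v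
    have := finrank_flatSpace_pos φ hv
    omega
  induction hk : n - rkOf ℓ v generalizing v with
  | zero => exact hvan v hv (by omega)
  | succ k ih =>
    exact mem_pointIdealC_pow_of_rkOf_succ hφ hess hnd hf hv (by omega)
      fun w hw hrw => ih w hw (by omega) (by omega)

/-- If a homogeneous polynomial `f ∈ ℂ[X₀,…,Xₙ]` of degree `d − n − 1`
vanishes at each point `v` of the point residual `R₀(P)` to order at least `ord_P(v)`, then it
vanishes at every nonzero `v ∈ ℝ^{n+1}` to order at least `ord_P(L_v)`. -/
theorem adjoint_reduction_to_dimension_zero {n d : ℕ}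
    (ℓ : Fin d → MvPolynomial (Fin (n + 1)) ℝ) (hP : IsPolytopeSetup ℓ)
    (f : MvPolynomial (Fin (n + 1)) ℂ) (hf : f.IsHomogeneous (d - n - 1))
    (hvan : ∀ v : Fin (n + 1) → ℝ, v ≠ 0 → rkOf ℓ v = n →
      f ∈ pointIdealC v ^ ordOf ℓ v) :
    ∀ v : Fin (n + 1) → ℝ, v ≠ 0 → f ∈ pointIdealC v ^ ordOf ℓ v := by
  have : NeZero n := .of_pos hP.hn
  exact adjoint_reduction_to_dimension_zero_general ℓ hP.hhom
    (fun x => eq_zero_of_forall_eval_eq_zero hP.hhom hP.hcpt.isBounded hP.hfull) f hf hvan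

end
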